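/- Let n be a positive integer and let λ, μ, ν ∈ P[n]. Then the number of λ-dominant set-valued tableaux of shape μ with entries ≤ n and weight ν−λ equals the number of μ-dominant set-valued contratableaux of shape λ with entries ≤ n and weight ν−μ; that is, |SVT^λ_{ν−λ}(μ)| = |SVCT^μ_{ν−μ}(λ)|. -/

import Mathlib

/-!
A set-valued tableau `T` of shape `mu` is the same as a marked Gelfand-Tsetlin pattern `(x, m)` with
bottom row `mu` (`bijOn_tab`): `x i j` counts the boxes of row `j` with smallest entry at most `i`,
and `m i j = 1` when `i` occurs in row `j` as a non-minimal entry of a box.  The number of `i`'s in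
row `j` is then `x i j - x (i-1) j + m i j` (`rowOcc_tab`).  Rotating by 180 degrees and replacing
`v` by `n + 1 - v` identifies contratableaux of shape `lam` with set-valued tableaux of shape `lam`
(`bijOn_rot`), hence with marked patterns `(y, m')` with bottom row `lam`.

Each row is read as a weakly decreasing word, so dominance only has to be tested at the prefixes
ending inside a row just after the letters `i + 1` (`domFrom_of_sorted`).  With `N i k` the number
`lam i` plus the number of `i`'s in the top `k` rows of `T`, the tableau `T` is `lam`-dominant iff
`N (i+1) k ≤ N i (k-1)` for all `i, k ≥ 1`.

Given such a `T`, put `y i j = N (n-i+j) (n-i)` and move the mark `(i, j)` to `(n+1-j, i-j)`.  One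
half of the interlacing inequalities for `y` is the dominance of `T`; the other half says that row
counts are at least the marks, that is, that `x` is monotone.  For the contratableau of `(y, m')`,
the content `mu v` plus the number of `v`'s in rows `k, k+1, …` from the bottom telescopes to
`N (v+k-1) (v-1) + x (v+k-1) v` (`forward_Nup`).  Consequently its `mu`-dominance is the other half
of the interlacing inequalities for `x` together with the condition on the marks, and its weight
is `nu - mu`.  The same identity can be solved for `x`, which gives the inverse map (`backward`), so
the two sets of patterns are equinumerous (`ncard_PatA_eq_ncard_PatB`).
-/

/-!
Common combinatorial definitions: partitions, (skew) set-valued tableaux,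
contratableaux, reading words, dominance, Gelfand-Tsetlin patterns, and the
maps Υ and Ω.  Partitions are encoded as functions `ℕ → ℕ` whose parts are
`lam 1, lam 2, …` (with `lam 0 = 0` as a normalization).  Tableaux are encoded
as functions `ℕ → ℕ → Finset ℕ` assigning to each box (row, column), both
indexed from `1`, its (finite) set of entries, with value `∅` outside the
shape. -/

/-- `lam` is a partition with at most `n` nonzero parts `lam 1 ≥ lam 2 ≥ ⋯`. -/
def IsPartition (n : ℕ) (lam : ℕ → ℕ) : Prop :=
  lam 0 = 0 ∧ (∀ i, 1 ≤ i → lam (i + 1) ≤ lam i) ∧ (∀ i, n < i → lam i = 0)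

/-- `|lam|`, the sum of the parts of a partition in `P[n]`. -/
def sumParts (n : ℕ) (lam : ℕ → ℕ) : ℕ := ∑ i ∈ Finset.Icc 1 n, lam i

/-- The boxes of the skew Young diagram `lam/mu` (rows indexed from the top,
starting at `1`; columns from the left, starting at `1`). -/
def SkewBox (lam mu : ℕ → ℕ) (i j : ℕ) : Prop :=
  1 ≤ i ∧ mu i < j ∧ j ≤ lam i

/-- The boxes of the straight Young diagram of `mu`. -/
def ShapeBox (mu : ℕ → ℕ) (i j : ℕ) : Prop :=
  1 ≤ i ∧ 1 ≤ j ∧ j ≤ mu i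

/-- A semi-standard set-valued tableau with entries in `[n] = {1, …, n}` on a
given set `box` of boxes (rows indexed from the top): every box carries a
nonempty subset of `[n]`, rows weakly increase from left to right, columns
strictly increase from top to bottom, and the filling vanishes off the shape. -/
def IsSSVT (n : ℕ) (box : ℕ → ℕ → Prop) (T : ℕ → ℕ → Finset ℕ) : Prop :=
  (∀ i j, box i j → (T i j).Nonempty) ∧
  (∀ i j, box i j → T i j ⊆ Finset.Icc 1 n) ∧
  (∀ i j, ¬ box i j → T i j = ∅) ∧
  (∀ i j, box i j → box i (j + 1) → ∀ a ∈ T i j, ∀ b ∈ T i (j + 1), a ≤ b) ∧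
  (∀ i j, box i j → box (i + 1) j → ∀ a ∈ T i j, ∀ b ∈ T (i + 1) j, a < b)

/-- The boxes of the rotated shape `C(lam)` (for `lam ∈ P[n]`): the `j`-th row
from the *bottom* (`1 ≤ j ≤ n`) consists of `lam j` right-justified boxes, in
columns `lam 1 - lam j + 1, …, lam 1`. -/
def ContraBox (n : ℕ) (lam : ℕ → ℕ) (j c : ℕ) : Prop :=
  1 ≤ j ∧ j ≤ n ∧ lam 1 - lam j < c ∧ c ≤ lam 1

/-- A set-valued contratableau of shape `lam` with entries in `[n]`: a
semi-standard set-valued tableau of shape `C(lam)`.  Here `T j c` is the box in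
the `j`-th row from the bottom and column `c`; "columns strictly increase from
top to bottom" says entries of row `j+1` (which lies above row `j`) are
strictly smaller than those below them in row `j`. -/
def IsSVCT (n : ℕ) (lam : ℕ → ℕ) (T : ℕ → ℕ → Finset ℕ) : Prop :=
  (∀ j c, ContraBox n lam j c → (T j c).Nonempty) ∧
  (∀ j c, ContraBox n lam j c → T j c ⊆ Finset.Icc 1 n) ∧
  (∀ j c, ¬ ContraBox n lam j c → T j c = ∅) ∧
  (∀ j c, ContraBox n lam j c → ContraBox n lam j (c + 1) →
    ∀ a ∈ T j c, ∀ b ∈ T j (c + 1), a ≤ b) ∧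
  (∀ j c, ContraBox n lam j c → ContraBox n lam (j + 1) c →
    ∀ a ∈ T (j + 1) c, ∀ b ∈ T j c, a < b)

/-- The entries of one cell, read in decreasing order. -/
def cellWord (S : Finset ℕ) : List ℕ := (S.sort (· ≤ ·)).reverse

/-- The row word: rows are read from top to bottom, each row from right to
left, the entries of each cell in decreasing order (reading over the rectangle
with `R` rows and `W` columns, which covers the shape; cells off the shape are
empty and contribute nothing). -/
def rowWordRect (R W : ℕ) (T : ℕ → ℕ → Finset ℕ) : List ℕ :=
  ((List.range R).map (fun i =>
    (((List.range W).reverse).map (fun j => cellWord (T (i + 1) (j + 1)))).flatten)).flatten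

/-- The column word: columns are read from rightmost to leftmost, each column
from top to bottom, the entries of each cell in decreasing order. -/
def colWordRect (R W : ℕ) (T : ℕ → ℕ → Finset ℕ) : List ℕ :=
  (((List.range W).reverse).map (fun j =>
    ((List.range R).map (fun i => cellWord (T (i + 1) (j + 1)))).flatten)).flatten

/-- The row word of a contratableau whose rows are indexed from the bottom
(`1, …, n`): rows are read from top to bottom (i.e. row `n` first), each row
from right to left, cell entries in decreasing order. -/
def contraRowWord (n W : ℕ) (T : ℕ → ℕ → Finset ℕ) : List ℕ :=
  (((List.range n).reverse).map (fun j =>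
    (((List.range W).reverse).map (fun c => cellWord (T (j + 1) (c + 1)))).flatten)).flatten

/-- A word is dominant if every prefix contains at least as many `i`'s as
`(i+1)`'s, for every `i ≥ 1`. -/
def Dominant (u : List ℕ) : Prop :=
  ∀ t i, 1 ≤ i → (u.take t).count (i + 1) ≤ (u.take t).count i

/-- The row word of the superstandard tableau `T_lam` of shape and weight
`lam` (its `i`-th row consists of `lam i` many `i`'s), for `lam ∈ P[n]`. -/
def superWord (n : ℕ) (lam : ℕ → ℕ) : List ℕ :=
  ((List.range n).map (fun i => List.replicate (lam (i + 1)) (i + 1))).flatten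

/-- A word `u` is `lam`-dominant if `r(T_lam) * u` is dominant. -/
def LamDominant (n : ℕ) (lam : ℕ → ℕ) (u : List ℕ) : Prop :=
  Dominant (superWord n lam ++ u)

/-- The number of occurrences of the entry `v` in row `r` of `T`
(columns `1, …, W`). -/
def rowOcc (W : ℕ) (T : ℕ → ℕ → Finset ℕ) (r v : ℕ) : ℕ :=
  ∑ c ∈ Finset.Icc 1 W, if v ∈ T r c then 1 else 0

/-- The number of occurrences of the entry `v` in `T` (the `v`-th coordinate
of the weight `wt T`), rows `1, …, R` and columns `1, …, W`. -/
def wtT (R W : ℕ) (T : ℕ → ℕ → Finset ℕ) (v : ℕ) : ℕ :=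
  ∑ r ∈ Finset.Icc 1 R, rowOcc W T r v

/-- The total number of entries `|T|` of a set-valued tableau. -/
def sizeT (R W : ℕ) (T : ℕ → ℕ → Finset ℕ) : ℕ :=
  ∑ r ∈ Finset.Icc 1 R, ∑ c ∈ Finset.Icc 1 W, (T r c).card

/-- A Gelfand-Tsetlin pattern of size `n`: a triangular array of integers
`x i j` (`1 ≤ j ≤ i ≤ n`) with `NE_{i,j} = x i j - x (i-1) j ≥ 0` and
`SE_{i,j} = x (i-1) j - x i (j+1) ≥ 0` for all `1 ≤ j < i ≤ n`, normalized to
vanish outside the triangle. -/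
def IsGT (n : ℕ) (x : ℕ → ℕ → ℤ) : Prop :=
  (∀ i j, 1 ≤ j → j < i → i ≤ n → x (i - 1) j ≤ x i j ∧ x i (j + 1) ≤ x (i - 1) j) ∧
  (∀ i j, ¬ (1 ≤ j ∧ j ≤ i ∧ i ≤ n) → x i j = 0)

/-- A GT pattern in `GT_ℤ(lam)`: bottom row equal to `lam`. -/
def IsGTZ (n : ℕ) (lam : ℕ → ℕ) (x : ℕ → ℕ → ℤ) : Prop :=
  IsGT n x ∧ ∀ j, 1 ≤ j → j ≤ n → x n j = (lam j : ℤ)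

/-- A valid set of marks on a GT pattern: `M ⊆ {(i,j) : 1 ≤ j < i ≤ n` and
`SE_{i,j}(x) > 0}`. -/
def MarksOK (n : ℕ) (x : ℕ → ℕ → ℤ) (M : Finset (ℕ × ℕ)) : Prop :=
  ∀ p ∈ M, 1 ≤ p.2 ∧ p.2 < p.1 ∧ p.1 ≤ n ∧ 0 < x (p.1 - 1) p.2 - x p.1 (p.2 + 1)

/-- A marked GT pattern in `MGT_ℤ(lam)`. -/
def IsMGTZ (n : ℕ) (lam : ℕ → ℕ) (x : ℕ → ℕ → ℤ) (M : Finset (ℕ × ℕ)) : Prop :=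
  IsGTZ n lam x ∧ MarksOK n x M

/-- The map `Υ` from marked GT patterns to set-valued tableaux, in closed form:
the entry `i` lies in the box in row `r`, column `c` iff `x_{i-1,r} < c ≤ x_{i,r}`
(the horizontal strip `x^{(i)}/x^{(i-1)}` is filled with `i`'s), or `(i,r) ∈ M`
and `c = x_{i-1,r}` (for a mark, `i` is added to the rightmost box of row `r`
of `X^{(i-1)}`, the box containing `i-1` there). -/
def Upsilon (n : ℕ) (x : ℕ → ℕ → ℤ) (M : Finset (ℕ × ℕ)) : ℕ → ℕ → Finset ℕ :=
  fun r c => (Finset.Icc 1 n).filter (fun i =>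
    (x (i - 1) r < (c : ℤ) ∧ (c : ℤ) ≤ x i r) ∨ ((i, r) ∈ M ∧ (c : ℤ) = x (i - 1) r))

/-- The map `Ω` from marked GT patterns to set-valued contratableaux of shape
`lam`, in closed form.  Rows are indexed from the bottom and the box in row `j`
and column `c` is the `d`-th box from the right where `d = lam 1 + 1 - c`.
The entry `v = n + 1 - i` lies there iff `y_{i-1,j} < d ≤ y_{i,j}` (the boxes
of `C(y^{(i)})/C(y^{(i-1)})` are filled with `n+1-i`), or `(i,j) ∈ M` and
`d = y_{i-1,j}` (for a mark, `n+1-i` is added to the leftmost box of row `j`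
of `Y^{(i-1)}`, the box containing `n+2-i` there). -/
def Omega (n : ℕ) (lam : ℕ → ℕ) (y : ℕ → ℕ → ℤ) (M : Finset (ℕ × ℕ)) : ℕ → ℕ → Finset ℕ :=
  fun j c => (Finset.Icc 1 n).filter (fun v =>
    (y (n - v) j < (lam 1 : ℤ) + 1 - (c : ℤ) ∧ (lam 1 : ℤ) + 1 - (c : ℤ) ≤ y (n + 1 - v) j) ∨
      ((n + 1 - v, j) ∈ M ∧ (lam 1 : ℤ) + 1 - (c : ℤ) = y (n - v) j))

/-- `N_{i,k} = lam i + (number of occurrences of i in the top k rows of T)`. -/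
def Ndom (W : ℕ) (lam : ℕ → ℕ) (T : ℕ → ℕ → Finset ℕ) (i k : ℕ) : ℕ :=
  lam i + ∑ r ∈ Finset.Icc 1 k, rowOcc W T r i

/-- `N↑_{i,k} = mu i + (number of occurrences of i in rows k, k+1, …, n from
the bottom of a contratableau)`. -/
def Nup (n W : ℕ) (mu : ℕ → ℕ) (T : ℕ → ℕ → Finset ℕ) (i k : ℕ) : ℕ :=
  mu i + ∑ r ∈ Finset.Icc k n, rowOcc W T r i

/-- The GT pattern `Y_T` with entries `y_{i,j} = N_{n-i+j, n-i}` (normalized to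
`0` outside the triangle). -/
def Ypat (n W : ℕ) (lam : ℕ → ℕ) (T : ℕ → ℕ → Finset ℕ) : ℕ → ℕ → ℤ :=
  fun i j => if 1 ≤ j ∧ j ≤ i ∧ i ≤ n then (Ndom W lam T (n - i + j) (n - i) : ℤ) else 0

/-- The transported mark set `M' = {(n+1-j, i-j) : (i,j) ∈ M}`. -/
def MarksOf (n : ℕ) (M : Finset (ℕ × ℕ)) : Finset (ℕ × ℕ) :=
  M.image (fun p => (n + 1 - p.2, p.1 - p.2))

/-- The stable Grothendieck polynomial `G_lam(x_1, …, x_n)`, a polynomial in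
variables `X 1, …, X n`. -/
noncomputable def Groth (n : ℕ) (lam : ℕ → ℕ) : MvPolynomial ℕ ℤ :=
  ∑ᶠ T ∈ {T : ℕ → ℕ → Finset ℕ | IsSSVT n (ShapeBox lam) T},
    (-1 : MvPolynomial ℕ ℤ) ^ (sizeT n (lam 1) T - sumParts n lam) *
      ∏ k ∈ Finset.Icc 1 n, MvPolynomial.X k ^ wtT n (lam 1) T k

/-! ### Marked Gelfand-Tsetlin patterns -/

/-- A marked Gelfand-Tsetlin pattern with bottom row `mu`.  The entry `x i j` is extended from the
triangle `1 ≤ j ≤ i ≤ n` by `0` for `j = 0` or `i < j` and by `mu j` for `n ≤ i`, and `m i j` is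
the indicator of the set of marks.  The inequality `inter` expresses both the second
interlacing condition and that only the positions `(i, j)` with `x i (j+1) < x (i-1) j` may be
marked. -/
structure Pat (n : ℕ) (mu : ℕ → ℕ) (x m : ℕ → ℕ → ℤ) : Prop where
  zero : ∀ i j, j = 0 ∨ i < j → x i j = 0
  top : ∀ i j, n ≤ i → x i j = mu j
  mono : ∀ i j, x i j ≤ x (i + 1) j
  inter : ∀ i j, 1 ≤ j → m (i + 1) j + x (i + 1) (j + 1) ≤ x i j
  mark : ∀ i j, m i j = 0 ∨ m i j = 1
  mark_zero : ∀ i j, i = 0 ∨ j = 0 ∨ n < i → m i j = 0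

namespace Pat
variable {n : ℕ} {mu : ℕ → ℕ} {x m : ℕ → ℕ → ℤ}

lemma mono_le (h : Pat n mu x m) {i i' : ℕ} (j : ℕ) (hi : i ≤ i') : x i j ≤ x i' j :=
  monotone_nat_of_le_succ (fun i => h.mono i j) hi

lemma nonneg (h : Pat n mu x m) (i j : ℕ) : 0 ≤ x i j := by
  have h0 : x 0 j = 0 := h.zero 0 j (by omega)
  have := h.mono_le j (Nat.zero_le i)
  omega

lemma mark_nonneg (h : Pat n mu x m) (i j : ℕ) : 0 ≤ m i j := by
  have := h.mark i j
  omega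

lemma mark_diag (h : Pat n mu x m) (i j : ℕ) (hij : i ≤ j) : m i j = 0 := by
  rcases i with _ | i
  · exact h.mark_zero 0 j (by omega)
  · have h1 := h.inter i j (by omega)
    have h2 := h.zero i j (by omega)
    have h3 := h.nonneg (i + 1) (j + 1)
    have h4 := h.mark_nonneg (i + 1) j
    omega

end Pat

/-- The number of `i`'s in row `j` of the tableau of a marked pattern: the length of row `j` of the
horizontal strip `x i / x (i-1)`, plus one for a mark. -/
def occ (x m : ℕ → ℕ → ℤ) (i j : ℕ) : ℤ := x i j - x (i - 1) j + m i j

/-- `lam i` plus the number of `i`'s in the top `k` rows, when row `j` contains `o i j` letters `i`. -/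
def NZ (lam : ℕ → ℕ) (o : ℕ → ℕ → ℤ) (i k : ℕ) : ℤ :=
  (lam i : ℤ) + ∑ r ∈ Finset.range k, o i (r + 1)

/-- `mu v` plus the number of `v`'s in the top `k` rows (rows `n, n-1, …, n-k+1` from the bottom) of
the contratableau obtained by rotation, where `v` becomes `n + 1 - v`. -/
def NupZ (n : ℕ) (mu : ℕ → ℕ) (o : ℕ → ℕ → ℤ) (v k : ℕ) : ℤ :=
  (mu v : ℤ) + ∑ r ∈ Finset.range k, o (n + 1 - v) (n - r)

lemma NZ_zero (lam : ℕ → ℕ) (o : ℕ → ℕ → ℤ) (i : ℕ) : NZ lam o i 0 = lam i := by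
  simp [NZ]

lemma NZ_succ (lam : ℕ → ℕ) (o : ℕ → ℕ → ℤ) (i k : ℕ) :
    NZ lam o i (k + 1) = NZ lam o i k + o i (k + 1) := by
  simp [NZ, Finset.sum_range_succ, add_assoc]

lemma NupZ_zero (n : ℕ) (mu : ℕ → ℕ) (o : ℕ → ℕ → ℤ) (v : ℕ) : NupZ n mu o v 0 = mu v := by
  simp [NupZ]

lemma NupZ_succ (n : ℕ) (mu : ℕ → ℕ) (o : ℕ → ℕ → ℤ) (v k : ℕ) :
    NupZ n mu o v (k + 1) = NupZ n mu o v k + o (n + 1 - v) (n - k) := by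
  simp [NupZ, Finset.sum_range_succ, add_assoc]

lemma Pat.occ_zero {n : ℕ} {mu : ℕ → ℕ} {x m : ℕ → ℕ → ℤ} (h : Pat n mu x m) (i j : ℕ)
    (hij : i = 0 ∨ j = 0 ∨ i < j ∨ n < i) : occ x m i j = 0 := by
  unfold occ
  rcases hij with rfl | rfl | hij | hij
  · simp [h.mark_zero 0 j (by omega)]
  · rw [h.zero i 0 (by omega), h.zero (i - 1) 0 (by omega), h.mark_zero i 0 (by omega)]; rfl
  · rw [h.zero i j (by omega), h.zero (i - 1) j (by omega), h.mark_diag i j (by omega)]; rfl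
  · rw [h.top i j (by omega), h.top (i - 1) j (by omega), h.mark_zero i j (by omega)]; simp

lemma Pat.mark_le_occ {n : ℕ} {mu : ℕ → ℕ} {x m : ℕ → ℕ → ℤ} (h : Pat n mu x m) (i j : ℕ) :
    m i j ≤ occ x m i j := by
  have := h.mono_le j (Nat.sub_le i 1)
  unfold occ; omega

/-- Marked patterns of the `lam`-dominant set-valued tableaux of shape `mu` and weight `nu - lam`. -/
def PatA (n : ℕ) (lam mu nu : ℕ → ℕ) (x m : ℕ → ℕ → ℤ) : Prop :=
  Pat n mu x m ∧
  (∀ k < n, ∀ i, 1 ≤ i → NZ lam (occ x m) (i + 1) (k + 1) ≤ NZ lam (occ x m) i k) ∧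
  ∀ i, 1 ≤ i → i ≤ n → NZ lam (occ x m) i n = nu i

/-- Marked patterns of the `mu`-dominant set-valued contratableaux of shape `lam` and weight
`nu - mu`. -/
def PatB (n : ℕ) (lam mu nu : ℕ → ℕ) (y m : ℕ → ℕ → ℤ) : Prop :=
  Pat n lam y m ∧
  (∀ k < n, ∀ v, 1 ≤ v → NupZ n mu (occ y m) (v + 1) (k + 1) ≤ NupZ n mu (occ y m) v k) ∧
  ∀ v, 1 ≤ v → v ≤ n → NupZ n mu (occ y m) v n = nu v

/-! ### The bijection between the two kinds of patterns -/

/-- The pattern with entries `y i j = N (n-i+j) (n-i)`, where `N a k` is `lam a` plus the number of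
`a`'s in the top `k` rows. -/
def toY (n : ℕ) (lam : ℕ → ℕ) (x m : ℕ → ℕ → ℤ) (i j : ℕ) : ℤ :=
  if j = 0 then 0 else NZ lam (occ x m) (n - i + j) (n - i)

/-- The mark at `(a, b)` is transported to `(n + 1 - b, a - b)`. -/
def toYMark (n : ℕ) (m : ℕ → ℕ → ℤ) (i j : ℕ) : ℤ :=
  if i = 0 ∨ j = 0 ∨ n < i then 0 else m (n + 1 - i + j) (n + 1 - i)

/-- Inverse of `toY`, obtained by solving the identity `forward_Nup` for `x`. -/
def toX (n : ℕ) (mu : ℕ → ℕ) (y m : ℕ → ℕ → ℤ) (i j : ℕ) : ℤ :=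
  if j = 0 ∨ i < j ∨ n < j then 0
  else NupZ n mu (occ y m) j (n + j - i) - y (n + 1 - j) (i + 1 - j)

/-- Inverse of `toYMark`. -/
def toXMark (n : ℕ) (m : ℕ → ℕ → ℤ) (i j : ℕ) : ℤ :=
  if 1 ≤ j ∧ j < i ∧ i ≤ n then m (n + 1 - j) (i - j) else 0

section forward
variable {n : ℕ} {lam mu nu : ℕ → ℕ} {x m : ℕ → ℕ → ℤ}

lemma NZ_big (hlam : IsPartition n lam) (h : Pat n mu x m) (i k : ℕ) (hi : n < i) :
    NZ lam (occ x m) i k = 0 := by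
  unfold NZ
  rw [hlam.2.2 i hi, Finset.sum_eq_zero]
  · rfl
  · intro r _
    exact h.occ_zero _ _ (by omega)

lemma NZ_stable (h : Pat n mu x m) (i k : ℕ) (hk : i ≤ k) :
    NZ lam (occ x m) i k = NZ lam (occ x m) i i := by
  induction k, hk using Nat.le_induction with
  | base => rfl
  | succ k hk ih => rw [NZ_succ, ih, h.occ_zero _ _ (by omega), add_zero]

/-- Monotonicity of `y` is dominance of the tableau of `(x, m)`; the remaining interlacing
inequality, marks included, is monotonicity of `x`. -/
lemma forward_pat (hlam : IsPartition n lam) (h : PatA n lam mu nu x m) :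
    Pat n lam (toY n lam x m) (toYMark n m) := by
  obtain ⟨hp, hd, -⟩ := h
  refine ⟨?_, ?_, ?_, ?_, ?_, ?_⟩
  · intro i j hij
    unfold toY
    split_ifs with hj
    · rfl
    · exact NZ_big hlam hp _ _ (by omega)
  · intro i j hi
    unfold toY
    split_ifs with hj
    · simp [hj, hlam.1]
    · rw [Nat.sub_eq_zero_of_le hi, zero_add, NZ_zero]
  · intro i j
    unfold toY
    split_ifs with hj
    · rfl
    · by_cases hi : i < n
      · have := hd (n - (i + 1)) (by omega) (n - (i + 1) + j) (by omega)
        convert this using 2 <;> omega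
      · rw [Nat.sub_eq_zero_of_le (by omega : n ≤ i), Nat.sub_eq_zero_of_le (by omega : n ≤ i + 1)]
  · intro i j hj
    unfold toY toYMark
    by_cases hi : i < n
    · rw [if_neg (by omega), if_neg (by omega), if_neg (by omega)]
      have h1 := hp.mark_le_occ (n - i + j) (n - i)
      have h2 := NZ_succ lam (occ x m) (n - i + j) (n - (i + 1))
      rw [show n - (i + 1) + 1 = n - i by omega] at h2
      rw [show n + 1 - (i + 1) = n - i by omega, show n - (i + 1) + (j + 1) = n - i + j by omega]
      omega
    · rw [if_pos (by omega), if_neg (by omega), if_neg (by omega),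
        Nat.sub_eq_zero_of_le (by omega : n ≤ i), Nat.sub_eq_zero_of_le (by omega : n ≤ i + 1),
        NZ_zero, NZ_zero]
      have := hlam.2.1 j hj
      simp only [zero_add]; omega
  · intro i j
    unfold toYMark
    split_ifs
    · simp
    · exact hp.mark _ _
  · intro i j hij
    exact if_pos hij

/-- The occurrence numbers of `(y, m')` are differences of consecutive values of
`k ↦ N (v+k-1) (v-1) + x (v+k-1) v`; the marks cancel. -/
lemma forward_occ (lam : ℕ → ℕ) (x m : ℕ → ℕ → ℤ) (v k : ℕ) (hv : 1 ≤ v)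
    (hvn : v ≤ n) (hk : 1 ≤ k) :
    occ (toY n lam x m) (toYMark n m) (n + 1 - v) k =
      (NZ lam (occ x m) (v + k - 1) (v - 1) + x (v + k - 1) v)
        - (NZ lam (occ x m) (v + k) (v - 1) + x (v + k) v) := by
  rw [occ, toY, toY, toYMark, if_neg (by omega), if_neg (by omega), if_neg (by omega)]
  have h2 := NZ_succ lam (occ x m) (v + k) (v - 1)
  rw [show v - 1 + 1 = v by omega] at h2
  rw [show n - (n + 1 - v) = v - 1 by omega, show n - (n + 1 - v - 1) = v by omega,
    show n + 1 - (n + 1 - v) = v by omega, h2, show v - 1 + k = v + k - 1 by omega]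
  unfold occ
  ring

/-- The key identity: the partial contents on the contratableau side, obtained by telescoping
`forward_occ`.  It turns `mu`-dominance into `Pat.inter` for `(x, m)`. -/
lemma forward_Nup (hlam : IsPartition n lam) (h : Pat n mu x m) (v k : ℕ) (hv : 1 ≤ v)
    (hvn : v ≤ n) (hk : k ≤ n) :
    NupZ n mu (occ (toY n lam x m) (toYMark n m)) v k =
      NZ lam (occ x m) (v + (n - k)) (v - 1) + x (v + (n - k)) v := by
  induction k with
  | zero =>
    rw [NupZ_zero, NZ_big hlam h _ _ (by omega), h.top _ _ (by omega), zero_add]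
  | succ k ih =>
    rw [NupZ_succ, ih (by omega), forward_occ lam x m v (n - k) hv hvn (by omega),
      show v + (n - k) - 1 = v + (n - (k + 1)) by omega]
    ring

lemma forward (hlam : IsPartition n lam) (hmu : IsPartition n mu) (h : PatA n lam mu nu x m) :
    PatB n lam mu nu (toY n lam x m) (toYMark n m) := by
  have hq := forward_pat hlam h
  refine ⟨hq, ?_, ?_⟩
  · obtain ⟨hp, hd, -⟩ := h
    intro k hk v hv
    by_cases hvn : v < n
    · rw [forward_Nup hlam hp _ _ (by omega) (by omega) (by omega),
        forward_Nup hlam hp _ _ (by omega) (by omega) (by omega)]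
      have h2 := NZ_succ lam (occ x m) (v + (n - k)) (v - 1)
      rw [show v - 1 + 1 = v by omega] at h2
      have h3 := hp.inter (v + (n - (k + 1))) v hv
      rw [show v + (n - (k + 1)) + 1 = v + (n - k) by omega] at h3
      rw [show v + 1 + (n - (k + 1)) = v + (n - k) by omega, show v + 1 - 1 = v by omega, h2]
      rw [occ, show v + (n - k) - 1 = v + (n - (k + 1)) by omega]
      omega
    · unfold NupZ
      rw [Finset.sum_eq_zero (fun r _ => hq.occ_zero _ _ (by omega))]
      have h1 := hmu.2.1 v hv
      have h2 : 0 ≤ ∑ r ∈ Finset.range k, occ (toY n lam x m) (toYMark n m) (n + 1 - v) (n - r) :=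
        Finset.sum_nonneg (fun r _ => (hq.mark_nonneg _ _).trans (hq.mark_le_occ _ _))
      omega
  · obtain ⟨hp, -, hw⟩ := h
    intro v hv hvn
    rw [forward_Nup hlam hp _ _ hv hvn le_rfl, ← hw v hv hvn, NZ_stable hp v n hvn]
    have h2 := NZ_succ lam (occ x m) v (v - 1)
    rw [show v - 1 + 1 = v by omega, occ, hp.zero (v - 1) v (by omega),
      hp.mark_diag v v le_rfl] at h2
    rw [h2]; simp

lemma toX_toY (hlam : IsPartition n lam) (hmu : IsPartition n mu) (h : Pat n mu x m) :
    toX n mu (toY n lam x m) (toYMark n m) = x := by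
  funext i j
  unfold toX
  split_ifs with hj
  · by_cases hj' : j = 0 ∨ i < j
    · rw [h.zero i j hj']
    · have h1 := h.top (max i n) j (le_max_right _ _)
      rw [hmu.2.2 j (by omega)] at h1
      have h2 := h.mono_le j (le_max_left i n)
      have h3 := h.nonneg i j
      simp only [Nat.cast_zero] at h1
      omega
  · push Not at hj
    rw [forward_Nup hlam h j _ (by omega) (by omega) (by omega), toY, if_neg (by omega)]
    by_cases hi : i ≤ n + j
    · rw [show j + (n - (n + j - i)) = i by omega, show n - (n + 1 - j) + (i + 1 - j) = i by omega,
        show n - (n + 1 - j) = j - 1 by omega]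
      ring
    · rw [NZ_big hlam h _ _ (by omega), NZ_big hlam h _ _ (by omega), h.top _ _ (by omega),
        h.top _ _ (by omega)]
      ring

lemma toXMark_toYMark (h : Pat n mu x m) : toXMark n (toYMark n m) = m := by
  funext i j
  unfold toXMark toYMark
  split_ifs with h1 h2
  · omega
  · congr 1 <;> omega
  · symm
    by_cases hj : j = 0 ∨ n < i
    · exact h.mark_zero i j (by omega)
    · exact h.mark_diag i j (by omega)

end forward

section backward
variable {n : ℕ} {lam mu nu : ℕ → ℕ} {y m : ℕ → ℕ → ℤ}

lemma NupZ_stable (h : Pat n lam y m) (v k : ℕ) (hk : k < v) :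
    NupZ n mu (occ y m) v k = mu v := by
  unfold NupZ
  rw [Finset.sum_eq_zero, add_zero]
  intro r hr
  rw [Finset.mem_range] at hr
  exact h.occ_zero _ _ (by omega)

lemma toX_zero (i j : ℕ) (hj : j = 0 ∨ i < j ∨ n < j) : toX n mu y m i j = 0 := if_pos hj

lemma toX_eq (i j : ℕ) (hj : 1 ≤ j) (hij : j ≤ i) (hjn : j ≤ n) : toX n mu y m i j =
    NupZ n mu (occ y m) j (n + j - i) - y (n + 1 - j) (i + 1 - j) := if_neg (by omega)

/-- A second form of `toX`, in which one further row has been split off from the partial content. -/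
lemma toX_alt (h : Pat n lam y m) (i j : ℕ) (hj : 1 ≤ j) (hij : j ≤ i) (hjn : j ≤ n) :
    toX n mu y m i j = NupZ n mu (occ y m) j (n + j - (i + 1)) - y (n - j) (i + 1 - j)
      + m (n + 1 - j) (i + 1 - j) := by
  rw [toX_eq i j hj hij hjn]
  by_cases hi : i < n + j
  · rw [show n + j - i = n + j - (i + 1) + 1 by omega, NupZ_succ,
      show n - (n + j - (i + 1)) = i + 1 - j by omega, occ, show n + 1 - j - 1 = n - j by omega]
    ring
  · rw [show n + j - i = 0 by omega, show n + j - (i + 1) = 0 by omega, h.zero _ _ (by omega),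
      h.zero _ _ (by omega), h.mark_diag _ _ (by omega)]
    ring

lemma toX_top (h : Pat n lam y m) (i j : ℕ) (hj : 1 ≤ j) (hij : n ≤ i) (hjn : j ≤ n) :
    toX n mu y m i j = mu j := by
  rw [toX_alt h i j hj (by omega) hjn, NupZ_stable h _ _ (by omega), h.zero _ _ (by omega),
    h.mark_diag _ _ (by omega)]
  ring

lemma toXMark_nonneg (h : Pat n lam y m) (i j : ℕ) : 0 ≤ toXMark n m i j := by
  unfold toXMark
  split_ifs
  · exact h.mark_nonneg _ _
  · rfl

lemma toX_inter (hmu : IsPartition n mu) (h : PatB n lam mu nu y m) (i j : ℕ) (hj : 1 ≤ j)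
    (hij : j ≤ i) (hjn : j < n) :
    toXMark n m (i + 1) j + toX n mu y m (i + 1) (j + 1) ≤ toX n mu y m i j := by
  obtain ⟨hp, hd, -⟩ := h
  rw [toX_alt hp i j hj hij hjn.le, toX_eq (i + 1) (j + 1) (by omega) (by omega) (by omega)]
  have h1 : toXMark n m (i + 1) j ≤ m (n + 1 - j) (i + 1 - j) := by
    unfold toXMark
    split_ifs
    · rfl
    · exact hp.mark_nonneg _ _
  have h2 : NupZ n mu (occ y m) (j + 1) (n + (j + 1) - (i + 1)) ≤
      NupZ n mu (occ y m) j (n + j - (i + 1)) := by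
    by_cases hi : i < n + j
    · have := hd (n + j - (i + 1)) (by omega) j hj
      rwa [show n + j - (i + 1) + 1 = n + (j + 1) - (i + 1) by omega] at this
    · rw [show n + j - (i + 1) = 0 by omega, show n + (j + 1) - (i + 1) = 0 by omega, NupZ_zero,
        NupZ_zero]
      exact_mod_cast hmu.2.1 j hj
  rw [show n + 1 - (j + 1) = n - j by omega, show i + 1 + 1 - (j + 1) = i + 1 - j by omega]
  omega

lemma toX_diag_nonneg (hmu : IsPartition n mu) (h : PatB n lam mu nu y m) (j : ℕ) (hj : 1 ≤ j) :
    0 ≤ toX n mu y m j j := by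
  obtain ⟨d, hd⟩ : ∃ d, d = n - j := ⟨_, rfl⟩
  induction d generalizing j with
  | zero =>
    rcases eq_or_lt_of_le (by omega : n ≤ j) with rfl | hlt
    · rw [toX_top h.1 _ _ hj le_rfl le_rfl]; positivity
    · rw [toX_zero _ _ (by omega)]
  | succ d ih =>
    have h1 := ih (j + 1) (by omega) (by omega)
    have h2 := toX_inter hmu h j j hj le_rfl (by omega)
    have h3 := toXMark_nonneg h.1 (j + 1) j
    omega

lemma backward_pat (hmu : IsPartition n mu) (h : PatB n lam mu nu y m) :
    Pat n mu (toX n mu y m) (toXMark n m) := by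
  have hp := h.1
  refine ⟨?_, ?_, ?_, ?_, ?_, ?_⟩
  · intro i j hij
    exact toX_zero _ _ (by omega)
  · intro i j hi
    by_cases hj : j = 0 ∨ n < j
    · rw [toX_zero _ _ (by omega)]
      rcases hj with rfl | hj
      · simp [hmu.1]
      · simp [hmu.2.2 j hj]
    · exact toX_top hp i j (by omega) hi (by omega)
  · intro i j
    by_cases hj : j = 0 ∨ n < j ∨ i + 1 < j
    · rw [toX_zero _ _ (by omega), toX_zero _ _ (by omega)]
    · by_cases hj' : i + 1 = j
      · subst hj'
        rw [toX_zero i _ (by omega)]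
        exact toX_diag_nonneg hmu h _ (by omega)
      · rw [toX_alt hp i j (by omega) (by omega) (by omega),
          toX_eq (i + 1) j (by omega) (by omega) (by omega)]
        have h1 := hp.inter (n - j) (i + 1 - j) (by omega)
        rw [show n - j + 1 = n + 1 - j by omega, show i + 1 - j + 1 = i + 1 + 1 - j by omega] at h1
        omega
  · intro i j hj
    by_cases hij : i < j
    · rw [toX_zero _ _ (by omega), toX_zero _ _ (by omega), toXMark, if_neg (by omega)]; rfl
    by_cases hjn : j < n
    · exact toX_inter hmu h i j hj (by omega) hjn
    · rw [toX_zero (i + 1) _ (by omega), toXMark, if_neg (by omega)]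
      rcases eq_or_lt_of_le (by omega : n ≤ j) with rfl | hlt
      · rw [toX_top hp _ _ hj (by omega) le_rfl]; positivity
      · rw [toX_zero _ _ (by omega)]; rfl
  · intro i j
    unfold toXMark
    split_ifs
    · exact hp.mark _ _
    · simp
  · intro i j hij
    exact if_neg (by omega)

/-- The partial contents of the recovered pattern are the entries of `y`. -/
lemma backward_N (h : Pat n lam y m) (i k : ℕ) (hk : k < i) (hi : i ≤ n) :
    NZ lam (occ (toX n mu y m) (toXMark n m)) i k = y (n - k) (i - k) := by
  induction k with
  | zero => rw [NZ_zero]; exact (h.top n i le_rfl).symm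
  | succ k ih =>
    rw [NZ_succ, ih (by omega), occ, toX_eq i (k + 1) (by omega) (by omega) (by omega),
      toX_alt h (i - 1) (k + 1) (by omega) (by omega) (by omega), toXMark, if_pos (by omega),
      show i - 1 + 1 = i by omega, show n + 1 - (k + 1) = n - k by omega,
      show i + 1 - (k + 1) = i - k by omega]
    ring

lemma backward_N_diag (hmu : IsPartition n mu) (h : PatB n lam mu nu y m) (i k : ℕ) (h1 : 1 ≤ i)
    (hi : i ≤ n) (hk : i ≤ k) :
    NZ lam (occ (toX n mu y m) (toXMark n m)) i k = nu i := by
  rw [NZ_stable (backward_pat hmu h) i k hk]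
  have h2 := NZ_succ lam (occ (toX n mu y m) (toXMark n m)) i (i - 1)
  rw [show i - 1 + 1 = i by omega] at h2
  rw [h2, backward_N h.1 i (i - 1) (by omega) hi, occ, toX_zero (i - 1) _ (by omega),
    toX_eq i i h1 le_rfl hi, toXMark, if_neg (by omega), ← h.2.2 i h1 hi,
    show n - (i - 1) = n + 1 - i by omega, show i - (i - 1) = i + 1 - i by omega,
    show n + i - i = n by omega]
  ring

lemma backward (hlam : IsPartition n lam) (hmu : IsPartition n mu) (hnu : IsPartition n nu)
    (h : PatB n lam mu nu y m) : PatA n lam mu nu (toX n mu y m) (toXMark n m) := by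
  have hq := backward_pat hmu h
  refine ⟨hq, ?_, fun i h1 hi => backward_N_diag hmu h i n h1 hi hi⟩
  intro k hk i hi
  by_cases hin : n ≤ i
  · rw [NZ_big hlam hq _ _ (by omega)]
    exact add_nonneg (by positivity)
      (Finset.sum_nonneg fun r _ => (hq.mark_nonneg _ _).trans (hq.mark_le_occ _ _))
  by_cases hki : k < i
  · rw [backward_N h.1 _ _ (by omega) (by omega), backward_N h.1 _ _ (by omega) (by omega)]
    have := h.1.mono (n - (k + 1)) (i - k)
    rw [show n - (k + 1) + 1 = n - k by omega] at this
    rwa [show i + 1 - (k + 1) = i - k by omega]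
  · rw [backward_N_diag hmu h _ _ (by omega) (by omega) (by omega),
      backward_N_diag hmu h _ _ (by omega) (by omega) (by omega)]
    exact_mod_cast hnu.2.1 i hi

lemma toY_toX (hlam : IsPartition n lam) (hmu : IsPartition n mu) (h : PatB n lam mu nu y m) :
    toY n lam (toX n mu y m) (toXMark n m) = y := by
  funext i j
  unfold toY
  split_ifs with hj
  · rw [h.1.zero i j (by omega)]
  by_cases hij : i < j
  · rw [NZ_big hlam (backward_pat hmu h) _ _ (by omega), h.1.zero i j (by omega)]
  by_cases hi : i ≤ n
  · rw [backward_N h.1 _ _ (by omega) (by omega)]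
    congr 1 <;> omega
  · rw [show n - i = 0 by omega, NZ_zero, h.1.top i j (by omega), zero_add]

lemma toYMark_toXMark (h : Pat n lam y m) : toYMark n (toXMark n m) = m := by
  funext i j
  simp only [toXMark, toYMark]
  split_ifs with h1 h2
  · exact (h.mark_zero i j h1).symm
  · congr 1 <;> omega
  · exact (h.mark_diag i j (by omega)).symm

end backward

lemma ncard_PatA_eq_ncard_PatB {n : ℕ} {lam mu nu : ℕ → ℕ} (hlam : IsPartition n lam)
    (hmu : IsPartition n mu) (hnu : IsPartition n nu) :
    Set.ncard {p : (ℕ → ℕ → ℤ) × (ℕ → ℕ → ℤ) | PatA n lam mu nu p.1 p.2} =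
    Set.ncard {p : (ℕ → ℕ → ℤ) × (ℕ → ℕ → ℤ) | PatB n lam mu nu p.1 p.2} := by
  refine Set.BijOn.ncard_eq (f := fun p => (toY n lam p.1 p.2, toYMark n p.2))
    (Set.InvOn.bijOn (f' := fun p => (toX n mu p.1 p.2, toXMark n p.2)) ⟨?_, ?_⟩ ?_ ?_)
  · intro p hp
    exact Prod.ext (toX_toY hlam hmu hp.1) (toXMark_toYMark hp.1)
  · intro p hp
    exact Prod.ext (toY_toX hlam hmu hp) (toYMark_toXMark hp.1)
  · intro p hp
    exact forward hlam hmu hp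
  · intro p hp
    exact backward hlam hmu hnu hp

/-! ### Patterns and set-valued tableaux -/

open Classical in
/-- The set-valued tableau of a marked pattern: row `j` of the strip `x i / x (i-1)` is filled with
`i`'s, and for a mark at `(i, j)` the entry `i` is added to the last box of row `j` of `x (i-1)`. -/
noncomputable def tab (n : ℕ) (x m : ℕ → ℕ → ℤ) (j c : ℕ) : Finset ℕ :=
  (Finset.Icc 1 n).filter fun i =>
    (x (i - 1) j < c ∧ (c : ℤ) ≤ x i j) ∨ (m i j = 1 ∧ (c : ℤ) = x (i - 1) j)

lemma mem_tab {n : ℕ} {x m : ℕ → ℕ → ℤ} {i j c : ℕ} : i ∈ tab n x m j c ↔ (1 ≤ i ∧ i ≤ n) ∧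
    ((x (i - 1) j < c ∧ (c : ℤ) ≤ x i j) ∨ (m i j = 1 ∧ (c : ℤ) = x (i - 1) j)) := by
  simp [tab]

section tab
variable {n : ℕ} {mu : ℕ → ℕ} {x m : ℕ → ℕ → ℤ}

lemma IsPartition.antitone (hmu : IsPartition n mu) {i j : ℕ} (hi : 1 ≤ i) (hij : i ≤ j) :
    mu j ≤ mu i := by
  induction j, hij using Nat.le_induction with
  | base => rfl
  | succ j hj ih => exact (hmu.2.1 j (by omega)).trans ih

lemma Pat.le_top (h : Pat n mu x m) (i j : ℕ) : x i j ≤ mu j := by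
  have h1 := h.mono_le j (le_max_left i n)
  rwa [h.top _ _ (le_max_right i n)] at h1

lemma Pat.bounds (h : Pat n mu x m) {i j c : ℕ} (hi : i ∈ tab n x m j c) :
    x (i - 1) j ≤ c ∧ (c : ℤ) ≤ x i j ∧ 1 ≤ c ∧ 1 ≤ j := by
  obtain ⟨⟨h1, h2⟩, h3⟩ := mem_tab.1 hi
  have hm := h.mono_le j (Nat.sub_le i 1)
  have hn := h.nonneg (i - 1) j
  rcases h3 with ⟨h3, h4⟩ | ⟨h3, h4⟩
  · refine ⟨h3.le, h4, by omega, ?_⟩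
    by_contra hj
    have := h.zero i j (by omega)
    omega
  · have hj : 1 ≤ j := by
      by_contra hj
      have := h.mark_zero i j (by omega)
      omega
    have h5 := h.inter (i - 1) j hj
    rw [show i - 1 + 1 = i by omega] at h5
    have := h.nonneg i (j + 1)
    exact ⟨h4.symm.le, h4.le.trans hm, by omega, hj⟩

/-- Every box of row `j` of `x i` contains some entry `a ≤ i`, namely the first `a` with
`c ≤ x a j`. -/
lemma Pat.exists_entry (h : Pat n mu x m) {i j c : ℕ} (hc : 1 ≤ c) (hci : (c : ℤ) ≤ x i j) :
    ∃ a ∈ tab n x m j c, a ≤ i := by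
  have hex : ∃ a, (c : ℤ) ≤ x a j := ⟨i, hci⟩
  have hj : j ≠ 0 := by
    rintro rfl
    have := h.zero i 0 (by omega)
    omega
  have h0 : Nat.find hex ≠ 0 := by
    intro h0
    have h1 := Nat.find_spec hex
    rw [h0, h.zero 0 j (by omega)] at h1
    omega
  have h1 := Nat.find_min hex (m := Nat.find hex - 1) (by omega)
  refine ⟨Nat.find hex, mem_tab.2 ⟨⟨by omega, ?_⟩, Or.inl ⟨by omega, Nat.find_spec hex⟩⟩,
    Nat.find_min' hex hci⟩
  apply Nat.find_min' hex
  rw [h.top n j le_rfl]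
  exact hci.trans (h.le_top i j)

lemma tab_isSSVT (h : Pat n mu x m) : IsSSVT n (ShapeBox mu) (tab n x m) := by
  refine ⟨?_, ?_, ?_, ?_, ?_⟩
  · rintro j c ⟨hj, hc, hcm⟩
    obtain ⟨a, ha, -⟩ := h.exists_entry (i := n) (j := j) hc (by
      rw [h.top n j le_rfl]; exact_mod_cast hcm)
    exact ⟨a, ha⟩
  · intro j c _
    exact Finset.filter_subset _ _
  · intro j c hb
    rw [Finset.eq_empty_iff_forall_notMem]
    intro i hi
    have h1 := h.bounds hi
    have h2 := h.le_top i j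
    exact hb ⟨by omega, by omega, by omega⟩
  · intro j c _ _ a ha b hb
    by_contra hab
    have h1 := (h.bounds ha).1
    have h2 := (h.bounds hb).2.1
    have h3 := h.mono_le j (show b ≤ a - 1 by omega)
    push_cast at h2
    omega
  · intro j c _ _ a ha b hb
    by_contra hab
    have h2 := (h.bounds hb).2.1
    have h3 := h.mono_le (j + 1) (show b ≤ a by omega)
    obtain ⟨⟨h4, h5⟩, h6⟩ := mem_tab.1 ha
    have h7 := h.inter (a - 1) j (h.bounds ha).2.2.2
    rw [show a - 1 + 1 = a by omega] at h7
    have := h.mark_nonneg a j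
    omega

lemma rowOcc_tab (hmu : IsPartition n mu) (h : Pat n mu x m) (i j : ℕ) :
    (rowOcc (mu 1) (tab n x m) j i : ℤ) = occ x m i j := by
  by_cases hi : 1 ≤ i ∧ i ≤ n ∧ j ≠ 0
  · obtain ⟨hi1, hin, hj⟩ := hi
    have hm := h.mono_le j (Nat.sub_le i 1)
    have hn := h.nonneg (i - 1) j
    have ht : x i j ≤ mu 1 := (h.le_top i j).trans
      (by exact_mod_cast hmu.antitone le_rfl (by omega))
    have hint := h.inter (i - 1) j (by omega)
    rw [show i - 1 + 1 = i by omega] at hint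
    have hn' := h.nonneg i (j + 1)
    unfold rowOcc
    rw [← Finset.card_filter, occ]
    rcases h.mark i j with hk | hk
    · have : (Finset.Icc 1 (mu 1)).filter (fun c => i ∈ tab n x m j c) =
          Finset.Ioc (x (i - 1) j).toNat (x i j).toNat := by
        ext c
        simp only [Finset.mem_filter, Finset.mem_Icc, mem_tab, Finset.mem_Ioc]
        omega
      rw [this, Nat.card_Ioc]
      omega
    · have : (Finset.Icc 1 (mu 1)).filter (fun c => i ∈ tab n x m j c) =
          Finset.Icc (x (i - 1) j).toNat (x i j).toNat := by
        ext c
        simp only [Finset.mem_filter, Finset.mem_Icc, mem_tab]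
        omega
      rw [this, Nat.card_Icc]
      omega
  · rw [h.occ_zero i j (by omega)]
    unfold rowOcc
    rw [Finset.sum_eq_zero]
    · rfl
    · intro c _
      rw [if_neg]
      intro hmem
      have h1 := (mem_tab.1 hmem).1
      have h2 := (h.bounds hmem).2.2.2
      omega

end tab

section untab
variable {n : ℕ} {mu : ℕ → ℕ}

open Classical in
/-- The number of boxes in row `j` of `T` whose smallest entry is at most `i`. -/
noncomputable def cutX (mu : ℕ → ℕ) (T : ℕ → ℕ → Finset ℕ) (i j : ℕ) : ℤ :=
  (((Finset.Icc 1 (mu j)).filter fun c => ∃ a ∈ T j c, a ≤ i).card : ℤ)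

open Classical in
/-- The indicator of `i` occurring in row `j` of `T` in a box where it is not the smallest entry. -/
noncomputable def cutM (T : ℕ → ℕ → Finset ℕ) (i j : ℕ) : ℤ :=
  if ∃ c, i ∈ T j c ∧ ∃ a ∈ T j c, a < i then 1 else 0

/-- A set of positive integers closed under passing to smaller ones is an initial segment. -/
lemma mem_iff_le_card {s : Finset ℕ} (h1 : ∀ c ∈ s, 1 ≤ c)
    (h2 : ∀ c ∈ s, ∀ d, 1 ≤ d → d ≤ c → d ∈ s) {c : ℕ} (hc : 1 ≤ c) : c ∈ s ↔ c ≤ s.card := by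
  constructor
  · intro h
    have : Finset.Icc 1 c ⊆ s := by
      intro d hd
      rw [Finset.mem_Icc] at hd
      exact h2 c h d hd.1 hd.2
    simpa using Finset.card_le_card this
  · intro h
    by_contra hcs
    have : s ⊆ Finset.Ico 1 c := by
      intro d hd
      rw [Finset.mem_Ico]
      refine ⟨h1 d hd, ?_⟩
      by_contra hdc
      exact hcs (h2 d hd c hc (by omega))
    have := Finset.card_le_card this
    rw [Nat.card_Ico] at this
    omega

variable {T : ℕ → ℕ → Finset ℕ}

lemma IsSSVT.box (h : IsSSVT n (ShapeBox mu) T) {j c a : ℕ} (ha : a ∈ T j c) :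
    ShapeBox mu j c := by
  by_contra hb
  rw [h.2.2.1 j c hb] at ha
  simp at ha

lemma IsSSVT.row (h : IsSSVT n (ShapeBox mu) T) {j c d a b : ℕ} (hcd : c < d)
    (ha : a ∈ T j c) (hb : b ∈ T j d) : a ≤ b := by
  induction d, (hcd : c + 1 ≤ d) using Nat.le_induction generalizing b with
  | base => exact h.2.2.2.1 j c (h.box ha) (h.box hb) a ha b hb
  | succ d hd ih =>
    have hbox : ShapeBox mu j d := by
      have h1 := h.box ha
      have h2 := h.box hb
      unfold ShapeBox at *
      omega
    obtain ⟨e, he⟩ := h.1 j d hbox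
    exact (ih he).trans (h.2.2.2.1 j d hbox (h.box hb) e he b hb)

lemma le_cutX (h : IsSSVT n (ShapeBox mu) T) {i j c : ℕ} (hc : 1 ≤ c) :
    (c : ℤ) ≤ cutX mu T i j ↔ ∃ a ∈ T j c, a ≤ i := by
  unfold cutX
  rw [Nat.cast_le, ← mem_iff_le_card _ _ hc]
  · simp only [Finset.mem_filter, Finset.mem_Icc, and_iff_right_iff_imp]
    rintro ⟨a, ha, -⟩
    exact (h.box ha).2
  · intro c hc
    simp only [Finset.mem_filter, Finset.mem_Icc] at hc
    omega
  · intro c hc d hd hdc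
    simp only [Finset.mem_filter, Finset.mem_Icc] at hc ⊢
    obtain ⟨⟨h1, h2⟩, a, ha, hai⟩ := hc
    refine ⟨by omega, ?_⟩
    rcases eq_or_lt_of_le hdc with rfl | hlt
    · exact ⟨a, ha, hai⟩
    · have hbox : ShapeBox mu j d := ⟨(h.box ha).1, hd, by omega⟩
      obtain ⟨b, hb⟩ := h.1 j d hbox
      exact ⟨b, hb, (h.row hlt hb ha).trans hai⟩

lemma cutX_nonneg (T : ℕ → ℕ → Finset ℕ) (i j : ℕ) : 0 ≤ cutX mu T i j := by
  unfold cutX; positivity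

/-- To bound `cutX` it suffices to bound the column indices `c ≥ 1` below it. -/
lemma cutX_le {T : ℕ → ℕ → Finset ℕ} {i j : ℕ} {z : ℤ} (hz : 0 ≤ z)
    (hle : ∀ c : ℕ, 1 ≤ c → (c : ℤ) ≤ cutX mu T i j → (c : ℤ) ≤ z) : cutX mu T i j ≤ z := by
  by_cases h0 : 1 ≤ cutX mu T i j
  · have h1 := hle (cutX mu T i j).toNat (by omega) (by omega)
    omega
  · omega

lemma IsSSVT.col (hmu : IsPartition n mu) (h : IsSSVT n (ShapeBox mu) T) {j c b : ℕ}
    (hj : 1 ≤ j) (hb : b ∈ T (j + 1) c) :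
    (T j c).Nonempty ∧ ∀ a ∈ T j c, a < b := by
  have h1 := h.box hb
  have h2 : ShapeBox mu j c := ⟨hj, h1.2.1, h1.2.2.trans (hmu.2.1 j hj)⟩
  exact ⟨h.1 j c h2, fun a ha => h.2.2.2.2 j c h2 h1 a ha b hb⟩

lemma IsSSVT.row_le_entry (hmu : IsPartition n mu) (h : IsSSVT n (ShapeBox mu) T) {j c a : ℕ}
    (ha : a ∈ T j c) : j ≤ a := by
  induction j generalizing a with
  | zero => omega
  | succ j ih =>
    rcases Nat.eq_zero_or_pos j with rfl | hj
    · have := h.2.1 _ _ (h.box ha) ha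
      rw [Finset.mem_Icc] at this
      omega
    · obtain ⟨⟨b, hb⟩, hlt⟩ := h.col hmu hj ha
      have := ih hb
      have := hlt b hb
      omega

/-- The only box of row `j` that can hold `i` without having it as smallest entry is the last box
whose smallest entry is below `i`. -/
lemma IsSSVT.mark_pos (h : IsSSVT n (ShapeBox mu) T) {i j c : ℕ} (hi : 1 ≤ i) (hic : i ∈ T j c)
    (ha : ∃ a ∈ T j c, a < i) : (c : ℤ) = cutX mu T (i - 1) j := by
  have hc := (h.box hic).2.1
  have h1 : (c : ℤ) ≤ cutX mu T (i - 1) j := by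
    rw [le_cutX h hc]
    obtain ⟨a, ha, hai⟩ := ha
    exact ⟨a, ha, by omega⟩
  by_contra hne
  have h2 : ((c + 1 : ℕ) : ℤ) ≤ cutX mu T (i - 1) j := by push_cast; omega
  rw [le_cutX h (by omega)] at h2
  obtain ⟨b, hb, hbi⟩ := h2
  have := h.row (by omega) hic hb
  omega

lemma IsSSVT.entry_pos (h : IsSSVT n (ShapeBox mu) T) {j c a : ℕ} (ha : a ∈ T j c) :
    1 ≤ a ∧ a ≤ n := Finset.mem_Icc.1 (h.2.1 _ _ (h.box ha) ha)

lemma cut_pat (hmu : IsPartition n mu) (h : IsSSVT n (ShapeBox mu) T) :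
    Pat n mu (cutX mu T) (cutM T) := by
  have hmono : ∀ i j, cutX mu T i j ≤ cutX mu T (i + 1) j := by
    intro i j
    apply cutX_le (cutX_nonneg _ _ _)
    intro c hc h1
    rw [le_cutX h hc] at h1 ⊢
    obtain ⟨a, ha, hai⟩ := h1
    exact ⟨a, ha, by omega⟩
  refine ⟨?_, ?_, hmono, ?_, ?_, ?_⟩
  · intro i j hij
    apply le_antisymm _ (cutX_nonneg _ _ _)
    apply cutX_le le_rfl
    intro c hc h1
    rw [le_cutX h hc] at h1
    obtain ⟨a, ha, hai⟩ := h1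
    have := h.row_le_entry hmu ha
    have := (h.box ha).1
    omega
  · intro i j hi
    apply le_antisymm
    · apply cutX_le (by positivity)
      intro c hc h1
      rw [le_cutX h hc] at h1
      obtain ⟨a, ha, hai⟩ := h1
      exact_mod_cast (h.box ha).2.2
    · rcases Nat.eq_zero_or_pos (mu j) with h0 | h0
      · rw [h0]; exact cutX_nonneg _ _ _
      · rw [le_cutX h h0]
        have hj : 1 ≤ j := by
          by_contra hj
          rw [show j = 0 by omega, hmu.1] at h0
          omega
        obtain ⟨a, ha⟩ := h.1 j (mu j) ⟨hj, h0, le_rfl⟩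
        exact ⟨a, ha, (h.entry_pos ha).2.trans hi⟩
  · intro i j hj
    have h1 : cutX mu T (i + 1) (j + 1) ≤ cutX mu T i j := by
      apply cutX_le (cutX_nonneg _ _ _)
      intro c hc h1
      rw [le_cutX h hc] at h1 ⊢
      obtain ⟨b, hb, hbi⟩ := h1
      obtain ⟨⟨a, ha⟩, hlt⟩ := h.col hmu hj hb
      have := hlt a ha
      exact ⟨a, ha, by omega⟩
    unfold cutM
    split_ifs with hm
    · obtain ⟨c, hic, hac⟩ := hm
      have h2 := h.mark_pos (by omega) hic hac
      rw [Nat.add_sub_cancel] at h2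
      by_contra hcon
      have h3 : (c : ℤ) ≤ cutX mu T (i + 1) (j + 1) := by omega
      rw [le_cutX h (h.box hic).2.1] at h3
      obtain ⟨b, hb, hbi⟩ := h3
      have := (h.col hmu hj hb).2 _ hic
      omega
    · omega
  · intro i j
    unfold cutM
    split_ifs <;> simp
  · intro i j hij
    unfold cutM
    rw [if_neg]
    rintro ⟨c, hic, -⟩
    have := h.entry_pos hic
    have := (h.box hic).1
    omega

lemma tab_cut (h : IsSSVT n (ShapeBox mu) T) :
    tab n (cutX mu T) (cutM T) = T := by
  funext j c
  ext i
  rw [mem_tab]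
  constructor
  · rintro ⟨⟨hi, hin⟩, ⟨h1, h2⟩ | ⟨h1, h2⟩⟩
    · have hc : 1 ≤ c := by
        have := cutX_nonneg (mu := mu) T (i - 1) j
        omega
      rw [← not_le, le_cutX h hc] at h1
      rw [le_cutX h hc] at h2
      obtain ⟨a, ha, hai⟩ := h2
      have : ¬ a ≤ i - 1 := fun h' => h1 ⟨a, ha, h'⟩
      rwa [show i = a by omega]
    · have hm : ∃ c, i ∈ T j c ∧ ∃ a ∈ T j c, a < i := by
        by_contra hcon
        rw [cutM, if_neg hcon] at h1
        omega
      obtain ⟨d, hd, had⟩ := hm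
      have := h.mark_pos hi hd had
      rwa [show c = d by omega]
  · intro hic
    have hi := h.entry_pos hic
    have hc := (h.box hic).2.1
    refine ⟨hi, ?_⟩
    by_cases hle : (c : ℤ) ≤ cutX mu T (i - 1) j
    · right
      rw [le_cutX h hc] at hle
      obtain ⟨a, ha, hai⟩ := hle
      have hac : ∃ a ∈ T j c, a < i := ⟨a, ha, by omega⟩
      exact ⟨if_pos ⟨c, hic, hac⟩, h.mark_pos hi.1 hic hac⟩
    · left
      refine ⟨by omega, ?_⟩
      rw [le_cutX h hc]
      exact ⟨i, hic, le_rfl⟩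

variable {x m : ℕ → ℕ → ℤ}

lemma cutX_tab (h : Pat n mu x m) : cutX mu (tab n x m) = x := by
  funext i j
  have hT := tab_isSSVT h
  apply le_antisymm
  · apply cutX_le (h.nonneg i j)
    intro c hc h1
    rw [le_cutX hT hc] at h1
    obtain ⟨a, ha, hai⟩ := h1
    exact (h.bounds ha).2.1.trans (h.mono_le j hai)
  · by_cases h0 : 1 ≤ x i j
    · have h1 := (le_cutX hT (i := i) (j := j) (c := (x i j).toNat) (by omega)).2
        (h.exists_entry (by omega) (by omega))
      omega
    · have := cutX_nonneg (mu := mu) (tab n x m) i j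
      omega

lemma cutM_tab (h : Pat n mu x m) : cutM (tab n x m) = m := by
  funext i j
  unfold cutM
  split_ifs with hm
  · obtain ⟨c, hic, a, ha, hai⟩ := hm
    have h1 := (h.bounds ha).2.1
    have h2 := h.mono_le j (show a ≤ i - 1 by omega)
    have h3 := (mem_tab.1 hic).2
    omega
  · rcases h.mark i j with h1 | h1
    · exact h1.symm
    · exfalso
      apply hm
      have hi : 1 ≤ i ∧ i ≤ n ∧ 1 ≤ j := by
        by_contra hcon
        have := h.mark_zero i j (by omega)
        omega
      have h2 := h.inter (i - 1) j (by omega)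
      rw [show i - 1 + 1 = i by omega] at h2
      have h3 := h.nonneg i (j + 1)
      obtain ⟨a, ha, hai⟩ := h.exists_entry (i := i - 1) (j := j) (c := (x (i - 1) j).toNat)
        (by omega) (by omega)
      exact ⟨_, mem_tab.2 ⟨by omega, Or.inr ⟨h1, by omega⟩⟩, a, ha, by omega⟩

lemma bijOn_tab (hmu : IsPartition n mu) :
    Set.BijOn (fun p : (ℕ → ℕ → ℤ) × (ℕ → ℕ → ℤ) => tab n p.1 p.2)
      {p | Pat n mu p.1 p.2} {T | IsSSVT n (ShapeBox mu) T} := by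
  refine Set.InvOn.bijOn (f' := fun T => (cutX mu T, cutM T)) ⟨?_, ?_⟩ ?_ ?_
  · intro p hp
    exact Prod.ext (cutX_tab hp) (cutM_tab hp)
  · intro T hT
    exact tab_cut hT
  · intro p hp
    exact tab_isSSVT hp
  · intro T hT
    exact cut_pat hmu hT

end untab

/-! ### Rotation -/

section rot
variable {n : ℕ} {lam : ℕ → ℕ} {T S : ℕ → ℕ → Finset ℕ}

/-- Rotation by 180 degrees inside width `L`: columns are reversed and entries are replaced by
`n + 1 - v`.  Row indices stay the same, since rows of contratableaux are indexed from the bottom.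
Columns `c > L` are sent to column `0`, which is empty. -/
def rot (n L : ℕ) (T : ℕ → ℕ → Finset ℕ) (j c : ℕ) : Finset ℕ :=
  (T j (L + 1 - c)).image fun v => n + 1 - v

lemma mem_rot {L : ℕ} (h : ∀ j c, T j c ⊆ Finset.Icc 1 n) {j c v : ℕ} :
    v ∈ rot n L T j c ↔ 1 ≤ v ∧ n + 1 - v ∈ T j (L + 1 - c) := by
  simp only [rot, Finset.mem_image]
  constructor
  · rintro ⟨a, ha, rfl⟩
    have := Finset.mem_Icc.1 (h _ _ ha)
    rw [show n + 1 - (n + 1 - a) = a by omega]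
    exact ⟨by omega, ha⟩
  · rintro ⟨h1, h2⟩
    have := Finset.mem_Icc.1 (h _ _ h2)
    exact ⟨_, h2, by omega⟩

lemma rot_subset {L : ℕ} (h : ∀ j c, T j c ⊆ Finset.Icc 1 n) (j c : ℕ) :
    rot n L T j c ⊆ Finset.Icc 1 n := by
  intro v hv
  rw [mem_rot h] at hv
  have := Finset.mem_Icc.1 (h _ _ hv.2)
  rw [Finset.mem_Icc]
  omega

lemma rot_rot {L : ℕ} (h : ∀ j c, T j c ⊆ Finset.Icc 1 n)
    (h0 : ∀ j c, L < c → T j c = ∅) : rot n L (rot n L T) = T := by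
  funext j c
  ext v
  rw [mem_rot (rot_subset h), mem_rot h]
  by_cases hc : c ≤ L
  · rw [show L + 1 - (L + 1 - c) = c by omega]
    constructor
    · rintro ⟨h1, h2, h3⟩
      rwa [show v = n + 1 - (n + 1 - v) by omega]
    · intro hv
      have := Finset.mem_Icc.1 (h _ _ hv)
      rw [show n + 1 - (n + 1 - v) = v by omega]
      exact ⟨by omega, by omega, hv⟩
  · rw [h0 j c (by omega), h0 j _ (by omega)]
    simp

lemma IsSSVT.subset (h : IsSSVT n (ShapeBox lam) T) (j c : ℕ) : T j c ⊆ Finset.Icc 1 n := by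
  by_cases hb : ShapeBox lam j c
  · exact h.2.1 j c hb
  · rw [h.2.2.1 j c hb]; simp

lemma IsSVCT.subset (h : IsSVCT n lam T) (j c : ℕ) : T j c ⊆ Finset.Icc 1 n := by
  by_cases hb : ContraBox n lam j c
  · exact h.2.1 j c hb
  · rw [h.2.2.1 j c hb]; simp

lemma contraBox_iff (hlam : IsPartition n lam) (j c : ℕ) :
    ContraBox n lam j c ↔ ShapeBox lam j (lam 1 + 1 - c) ∧ 1 ≤ c := by
  unfold ContraBox ShapeBox
  by_cases hj : 1 ≤ j
  · have h1 := hlam.antitone le_rfl hj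
    by_cases hn : j ≤ n
    · omega
    · have := hlam.2.2 j (by omega)
      omega
  · omega

lemma shapeBox_iff (hlam : IsPartition n lam) (j c : ℕ) :
    ShapeBox lam j c ↔ ContraBox n lam j (lam 1 + 1 - c) ∧ 1 ≤ c := by
  unfold ContraBox ShapeBox
  by_cases hj : 1 ≤ j
  · have h1 := hlam.antitone le_rfl hj
    by_cases hn : j ≤ n
    · omega
    · have := hlam.2.2 j (by omega)
      omega
  · omega

lemma rot_isSVCT (hlam : IsPartition n lam) (h : IsSSVT n (ShapeBox lam) T) :
    IsSVCT n lam (rot n (lam 1) T) := by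
  have hs := h.subset
  refine ⟨?_, fun j c _ => rot_subset hs j c, ?_, ?_, ?_⟩
  · intro j c hb
    exact (h.1 j _ ((contraBox_iff hlam j c).1 hb).1).image _
  · intro j c hb
    rw [contraBox_iff hlam] at hb
    by_cases hb' : ShapeBox lam j (lam 1 + 1 - c)
    · have hc : c = 0 := by
        by_contra hc
        exact hb ⟨hb', by omega⟩
      have h1 := hlam.antitone le_rfl hb'.1
      have h2 := hb'.2
      omega
    · rw [rot, h.2.2.1 _ _ hb', Finset.image_empty]
  · intro j c hb hb' a ha b hb2
    rw [mem_rot hs] at ha hb2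
    have h1 := h.row (by unfold ContraBox at hb'; omega) hb2.2 ha.2
    have := h.entry_pos hb2.2
    omega
  · intro j c hb hb' a ha b hb2
    rw [mem_rot hs] at ha hb2
    have h1 := (h.col hlam hb.1 ha.2).2 _ hb2.2
    have := h.entry_pos ha.2
    omega

lemma IsSVCT.empty (h : IsSVCT n lam S) (j c : ℕ) (hc : lam 1 < c) :
    S j c = ∅ := h.2.2.1 j c (by unfold ContraBox; omega)

lemma rot_isSSVT (hlam : IsPartition n lam) (h : IsSVCT n lam S) :
    IsSSVT n (ShapeBox lam) (rot n (lam 1) S) := by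
  have hs := h.subset
  refine ⟨?_, fun j c _ => rot_subset hs j c, ?_, ?_, ?_⟩
  · intro j c hb
    exact (h.1 j _ ((shapeBox_iff hlam j c).1 hb).1).image _
  · intro j c hb
    rw [shapeBox_iff hlam] at hb
    by_cases hb' : ContraBox n lam j (lam 1 + 1 - c)
    · have hc : c = 0 := by
        by_contra hc
        exact hb ⟨hb', by omega⟩
      unfold ContraBox at hb'
      omega
    · rw [rot, h.2.2.1 _ _ hb', Finset.image_empty]
  · intro j c hb hb' a ha b hb2
    rw [mem_rot hs] at ha hb2
    rw [shapeBox_iff hlam] at hb hb'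
    have h0 : lam 1 + 1 - c = lam 1 + 1 - (c + 1) + 1 := by
      have := hb'.1
      unfold ContraBox at this
      omega
    rw [h0] at ha hb
    have h1 := h.2.2.2.1 j _ hb'.1 hb.1 _ hb2.2 _ ha.2
    have := Finset.mem_Icc.1 (hs _ _ hb2.2)
    omega
  · intro j c hb hb' a ha b hb2
    rw [mem_rot hs] at ha hb2
    rw [shapeBox_iff hlam] at hb hb'
    have h1 := h.2.2.2.2 j _ hb.1 hb'.1 _ hb2.2 _ ha.2
    have := Finset.mem_Icc.1 (hs _ _ hb2.2)
    omega

lemma bijOn_rot (hlam : IsPartition n lam) :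
    Set.BijOn (rot n (lam 1)) {T | IsSSVT n (ShapeBox lam) T} {S | IsSVCT n lam S} := by
  refine Set.InvOn.bijOn (f' := rot n (lam 1)) ⟨?_, ?_⟩ ?_ ?_
  · intro T hT
    refine rot_rot hT.subset fun j c hc => hT.2.2.1 j c ?_
    rintro ⟨hj, -, h2⟩
    have := hlam.antitone le_rfl hj
    omega
  · intro S hS
    exact rot_rot hS.subset hS.empty
  · intro T hT
    exact rot_isSVCT hlam hT
  · intro S hS
    exact rot_isSSVT hlam hS

lemma rowOcc_rot (L : ℕ) (h : ∀ j c, T j c ⊆ Finset.Icc 1 n) (j v : ℕ) (hv : 1 ≤ v) :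
    rowOcc L (rot n L T) j v = rowOcc L T j (n + 1 - v) := by
  unfold rowOcc
  refine Finset.sum_nbij' (fun c => L + 1 - c) (fun c => L + 1 - c) ?_ ?_ ?_ ?_ ?_ <;>
    intro c hc <;> rw [Finset.mem_Icc] at hc
  · rw [Finset.mem_Icc]; omega
  · rw [Finset.mem_Icc]; omega
  · omega
  · omega
  · simp only [mem_rot h, hv, true_and]

end rot

/-! ### Dominance of row words -/

section words

/-- Dominance of the word `u` read after a word of content `c`. -/
def DomFrom (c : ℕ → ℕ) (u : List ℕ) : Prop :=
  ∀ t i, 1 ≤ i → c (i + 1) + (u.take t).count (i + 1) ≤ c i + (u.take t).count i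

lemma domFrom_append (c : ℕ → ℕ) (u v : List ℕ) :
    DomFrom c (u ++ v) ↔ DomFrom c u ∧ DomFrom (fun i => c i + u.count i) v := by
  constructor
  · intro h
    constructor
    · intro t i hi
      rcases le_total t u.length with ht | ht
      · simpa [List.take_append_of_le_length ht] using h t i hi
      · simpa [List.take_of_length_le ht] using h u.length i hi
    · intro t i hi
      have := h (u.length + t) i hi
      simp only [List.take_length_add_append, List.count_append] at this
      simp only
      omega
  · rintro ⟨h1, h2⟩ t i hi
    rcases le_total t u.length with ht | ht
    · simpa [List.take_append_of_le_length ht] using h1 t i hi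
    · obtain ⟨s, rfl⟩ := Nat.exists_eq_add_of_le ht
      have := h2 s i hi
      simp only [List.take_length_add_append, List.count_append]
      simp only at this
      omega

/-- In a weakly decreasing word all letters `i + 1` precede all letters `i`, so the critical prefix
for `i` is the one ending just before the first `i`. -/
lemma domFrom_of_sorted (c : ℕ → ℕ) (w : List ℕ) (hw : w.Pairwise (· ≥ ·)) :
    DomFrom c w ↔ ∀ i, 1 ≤ i → c (i + 1) + w.count (i + 1) ≤ c i := by
  constructor
  · intro h i hi
    induction w generalizing c with
    | nil => simpa using h 0 i hi
    | cons a w ih =>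
      rw [List.pairwise_cons] at hw
      rw [show a :: w = [a] ++ w from rfl, domFrom_append] at h
      have h0 := h.1 0 i hi
      simp only [List.take_zero, List.count_nil, add_zero] at h0
      by_cases ha : i + 1 ≤ a
      · have := ih _ hw.2 h.2
        simp only [List.count_cons, List.count_nil, beq_iff_eq] at this ⊢
        rw [if_neg (by omega : ¬ a = i)] at this
        omega
      · rw [List.count_eq_zero.2]
        · exact h0
        · intro hmem
          rcases List.mem_cons.1 hmem with h1 | h1
          · omega
          · have := hw.1 _ h1
            omega
  · intro h t i hi
    have h1 := h i hi
    have h2 := (List.take_sublist t w).count_le (i + 1)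
    omega

lemma domFrom_rows (c : ℕ → ℕ) (hc : ∀ i, 1 ≤ i → c (i + 1) ≤ c i) (row : ℕ → List ℕ)
    (hrow : ∀ r, (row r).Pairwise (· ≥ ·)) (K : ℕ) :
    DomFrom c ((List.range K).map row).flatten ↔
      ∀ k < K, ∀ i, 1 ≤ i →
        c (i + 1) + ∑ r ∈ Finset.range (k + 1), (row r).count (i + 1) ≤
          c i + ∑ r ∈ Finset.range k, (row r).count i := by
  have hcount : ∀ K i, (((List.range K).map row).flatten).count i =
      ∑ r ∈ Finset.range K, (row r).count i := by
    intro K i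
    induction K with
    | zero => simp
    | succ K ih => rw [List.range_succ, Finset.sum_range_succ, ← ih]; simp
  induction K with
  | zero =>
    simp only [List.range_zero, List.map_nil, List.flatten_nil, Nat.not_lt_zero, false_imp_iff,
      implies_true, iff_true]
    intro t i hi
    simpa using hc i hi
  | succ K ih =>
    rw [List.range_succ, List.map_append, List.flatten_append, domFrom_append]
    refine (and_congr_left' ih).trans ?_
    simp only [List.map_cons, List.map_nil, List.flatten_cons, List.flatten_nil, List.append_nil]
    rw [domFrom_of_sorted _ _ (hrow K), Nat.forall_lt_succ_right]
    simp only [hcount, Finset.sum_range_succ, add_assoc]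

lemma count_superWord (n : ℕ) (lam : ℕ → ℕ) (i : ℕ) :
    (superWord n lam).count i = if 1 ≤ i ∧ i ≤ n then lam i else 0 := by
  induction n with
  | zero => simp [superWord]; omega
  | succ n ih =>
    have : superWord (n + 1) lam = superWord n lam ++ List.replicate (lam (n + 1)) (n + 1) := by
      simp [superWord, List.range_succ]
    rw [this, List.count_append, ih, List.count_replicate]
    by_cases h : n + 1 = i
    · subst h; simp
    · simp only [beq_iff_eq, h, if_false, add_zero]
      congr 1
      simp only [eq_iff_iff]; omega

lemma domFrom_superWord (n : ℕ) (lam : ℕ → ℕ) (h : ∀ i, 1 ≤ i → lam (i + 1) ≤ lam i) :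
    DomFrom 0 (superWord n lam) := by
  unfold superWord
  rw [domFrom_rows 0 (by simp) (fun i => List.replicate (lam (i + 1)) (i + 1))
    (fun r => List.pairwise_replicate.2 (Or.inr le_rfl))]
  intro k hk i hi
  simp only [List.count_replicate, beq_iff_eq, Pi.zero_apply, zero_add]
  obtain ⟨i, rfl⟩ : ∃ i', i = i' + 1 := ⟨i - 1, by omega⟩
  simp only [Nat.add_right_cancel_iff, Finset.sum_ite_eq', Finset.mem_range]
  have := h (i + 1) hi
  split_ifs <;> omega

lemma lamDominant_iff {n : ℕ} {lam : ℕ → ℕ} (hlam : IsPartition n lam) (u : List ℕ) :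
    LamDominant n lam u ↔ DomFrom lam u := by
  have h1 : LamDominant n lam u ↔ DomFrom 0 (superWord n lam ++ u) := by
    simp [LamDominant, Dominant, DomFrom]
  rw [h1, domFrom_append, and_iff_right (domFrom_superWord n lam hlam.2.1)]
  have h2 : ∀ i, 1 ≤ i → (0 : ℕ → ℕ) i + (superWord n lam).count i = lam i := by
    intro i hi
    rw [count_superWord, Pi.zero_apply, zero_add]
    split_ifs with h
    · rfl
    · exact (hlam.2.2 i (by omega)).symm
  unfold DomFrom
  refine forall_congr' fun t => forall_congr' fun i => ?_
  constructor
  · intro h hi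
    simpa only [h2 i hi, h2 (i + 1) (by omega)] using h hi
  · intro h hi
    simpa only [h2 i hi, h2 (i + 1) (by omega)] using h hi

/-- The word of row `j`, read from right to left. -/
def rowList (W : ℕ) (T : ℕ → ℕ → Finset ℕ) (j : ℕ) : List ℕ :=
  (((List.range W).reverse).map (fun c => cellWord (T j (c + 1)))).flatten

lemma count_cellWord (S : Finset ℕ) (v : ℕ) : (cellWord S).count v = if v ∈ S then 1 else 0 := by
  unfold cellWord
  rw [List.count_reverse]
  split_ifs with h
  · exact List.count_eq_one_of_mem (Finset.sort_nodup _ _) ((Finset.mem_sort _).2 h)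
  · exact List.count_eq_zero.2 (by simpa using h)

lemma count_rowList (W : ℕ) (T : ℕ → ℕ → Finset ℕ) (j v : ℕ) :
    (rowList W T j).count v = rowOcc W T j v := by
  unfold rowList rowOcc
  induction W with
  | zero => simp
  | succ W ih =>
    rw [List.range_succ, List.reverse_append, Finset.sum_Icc_succ_top (by omega), ← ih]
    simp [count_cellWord, add_comm]

lemma rowList_sorted (W : ℕ) (T : ℕ → ℕ → Finset ℕ) (j : ℕ)
    (h : ∀ c d, c < d → ∀ a ∈ T j c, ∀ b ∈ T j d, a ≤ b) :
    (rowList W T j).Pairwise (· ≥ ·) := by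
  unfold rowList
  rw [List.pairwise_flatten]
  constructor
  · intro l hl
    obtain ⟨c, -, rfl⟩ := List.mem_map.1 hl
    unfold cellWord
    rw [List.pairwise_reverse]
    exact Finset.pairwise_sort _ _
  · rw [List.pairwise_map, List.pairwise_reverse]
    refine List.pairwise_lt_range.imp ?_
    intro c d hcd b hb a ha
    simp only [cellWord, List.mem_reverse, Finset.mem_sort] at ha hb
    exact h _ _ (by omega) a ha b hb

lemma rowWord_dominant_iff {n : ℕ} {lam : ℕ → ℕ} (hlam : IsPartition n lam) (R W : ℕ)
    (T : ℕ → ℕ → Finset ℕ)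
    (h : ∀ j c d, c < d → ∀ a ∈ T j c, ∀ b ∈ T j d, a ≤ b) :
    LamDominant n lam (rowWordRect R W T) ↔ ∀ k < R, ∀ i, 1 ≤ i →
      lam (i + 1) + ∑ r ∈ Finset.range (k + 1), rowOcc W T (r + 1) (i + 1) ≤
        lam i + ∑ r ∈ Finset.range k, rowOcc W T (r + 1) i := by
  rw [lamDominant_iff hlam, show rowWordRect R W T =
    ((List.range R).map (fun r => rowList W T (r + 1))).flatten from rfl,
    domFrom_rows lam hlam.2.1 _ (fun r => rowList_sorted W T (r + 1) (h (r + 1)))]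
  simp only [count_rowList]

lemma contraRowWord_dominant_iff {n : ℕ} {mu : ℕ → ℕ} (hmu : IsPartition n mu) (W : ℕ)
    (T : ℕ → ℕ → Finset ℕ)
    (h : ∀ j c d, c < d → ∀ a ∈ T j c, ∀ b ∈ T j d, a ≤ b) :
    LamDominant n mu (contraRowWord n W T) ↔ ∀ k < n, ∀ i, 1 ≤ i →
      mu (i + 1) + ∑ r ∈ Finset.range (k + 1), rowOcc W T (n - r) (i + 1) ≤
        mu i + ∑ r ∈ Finset.range k, rowOcc W T (n - r) i := by
  have hw : contraRowWord n W T =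
      ((List.range n).map (fun r => rowList W T (n - r))).flatten := by
    unfold contraRowWord
    congr 1
    apply List.ext_getElem
    · simp
    · intro i h1 h2
      simp only [List.length_map, List.length_reverse, List.length_range] at h1
      simp only [List.getElem_map, List.getElem_reverse, List.length_range, List.getElem_range]
      rw [show n - 1 - i + 1 = n - i by omega]
      rfl
  rw [lamDominant_iff hmu, hw,
    domFrom_rows mu hmu.2.1 _ (fun r => rowList_sorted W T (n - r) (h (n - r)))]
  simp only [count_rowList]

end words

/-! ### Transfer to patterns -/

section transfer
variable {n : ℕ} {lam mu nu : ℕ → ℕ} {x m : ℕ → ℕ → ℤ}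

lemma bijOn_sep {α β : Type*} {f : α → β} {s : Set α} {t : Set β} {P : α → Prop} {Q : β → Prop}
    (h : Set.BijOn f s t) (hPQ : ∀ a ∈ s, (P a ↔ Q (f a))) :
    Set.BijOn f {a | a ∈ s ∧ P a} {b | b ∈ t ∧ Q b} := by
  refine ⟨fun a ha => ⟨h.mapsTo ha.1, (hPQ a ha.1).1 ha.2⟩,
    h.injOn.mono fun a ha => ha.1, ?_⟩
  rintro b ⟨hb, hQ⟩
  obtain ⟨a, ha, rfl⟩ := h.surjOn hb
  exact ⟨a, ⟨ha, (hPQ a ha).2 hQ⟩, rfl⟩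

lemma NZ_tab (hmu : IsPartition n mu) (h : Pat n mu x m) (i k : ℕ) :
    NZ lam (occ x m) i k =
      ((lam i + ∑ r ∈ Finset.range k, rowOcc (mu 1) (tab n x m) (r + 1) i : ℕ) : ℤ) := by
  simp [NZ, rowOcc_tab hmu h]

lemma NupZ_rot_tab (hlam : IsPartition n lam) (h : Pat n lam x m) (v k : ℕ) (hv : 1 ≤ v) :
    NupZ n mu (occ x m) v k =
      ((mu v + ∑ r ∈ Finset.range k,
        rowOcc (lam 1) (rot n (lam 1) (tab n x m)) (n - r) v : ℕ) : ℤ) := by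
  simp [NupZ, rowOcc_rot (lam 1) (tab_isSSVT h).subset _ v hv, rowOcc_tab hlam h]

lemma sum_Icc_one_eq (n : ℕ) (f : ℕ → ℕ) :
    ∑ r ∈ Finset.Icc 1 n, f r = ∑ r ∈ Finset.range n, f (r + 1) := by
  induction n with
  | zero => simp
  | succ n ih => rw [Finset.sum_Icc_succ_top (by omega), Finset.sum_range_succ, ih]

lemma sum_Icc_one_eq_reverse (n : ℕ) (f : ℕ → ℕ) :
    ∑ r ∈ Finset.Icc 1 n, f r = ∑ r ∈ Finset.range n, f (n - r) := by
  rw [sum_Icc_one_eq, ← Finset.sum_range_reflect]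
  refine Finset.sum_congr rfl fun r hr => ?_
  rw [Finset.mem_range] at hr
  congr 1
  omega

lemma dominant_tab_iff (hlam : IsPartition n lam) (hmu : IsPartition n mu) (h : Pat n mu x m) :
    (LamDominant n lam (rowWordRect n (mu 1) (tab n x m)) ∧
      ∀ i, 1 ≤ i → i ≤ n → lam i + wtT n (mu 1) (tab n x m) i = nu i) ↔
    ((∀ k < n, ∀ i, 1 ≤ i → NZ lam (occ x m) (i + 1) (k + 1) ≤ NZ lam (occ x m) i k) ∧
      ∀ i, 1 ≤ i → i ≤ n → NZ lam (occ x m) i n = nu i) := by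
  rw [rowWord_dominant_iff hlam _ _ (tab n x m)
    fun j c d hcd a ha b hb => (tab_isSSVT h).row hcd ha hb]
  simp only [NZ_tab hmu h, Nat.cast_le, Nat.cast_inj, wtT, sum_Icc_one_eq]

lemma dominant_rot_tab_iff (hlam : IsPartition n lam) (hmu : IsPartition n mu)
    (h : Pat n lam x m) :
    (LamDominant n mu (contraRowWord n (lam 1) (rot n (lam 1) (tab n x m))) ∧
      ∀ i, 1 ≤ i → i ≤ n → mu i + wtT n (lam 1) (rot n (lam 1) (tab n x m)) i = nu i) ↔
    ((∀ k < n, ∀ v, 1 ≤ v → NupZ n mu (occ x m) (v + 1) (k + 1) ≤ NupZ n mu (occ x m) v k) ∧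
      ∀ v, 1 ≤ v → v ≤ n → NupZ n mu (occ x m) v n = nu v) := by
  have hT := tab_isSSVT h
  rw [contraRowWord_dominant_iff hmu]
  · simp only [wtT, sum_Icc_one_eq_reverse]
    refine and_congr ?_ ?_
    · refine forall₂_congr fun k _ => forall₂_congr fun v hv => ?_
      rw [NupZ_rot_tab hlam h _ _ hv, NupZ_rot_tab hlam h _ _ (by omega), Nat.cast_le]
    · refine forall₂_congr fun v hv => forall_congr' fun _ => ?_
      rw [NupZ_rot_tab hlam h _ _ hv, Nat.cast_inj]
  · intro j c d hcd a ha b hb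
    rw [mem_rot hT.subset] at ha hb
    have h0 := (hT.box hb.2).2.1
    have h1 := hT.row (by omega) hb.2 ha.2
    have := hT.entry_pos hb.2
    omega

end transfer

/-- For `lam, mu, nu ∈ P[n]`, the number of `lam`-dominant
set-valued tableaux of shape `mu` with entries `≤ n` and weight `nu - lam`
equals the number of `mu`-dominant set-valued contratableaux of shape `lam`
with entries `≤ n` and weight `nu - mu`:
`|SVT^lam_{nu-lam}(mu)| = |SVCT^mu_{nu-mu}(lam)|`. -/
theorem card_dominant_SVT_eq_card_dominant_SVCT
    (n : ℕ) (hn : 0 < n) (lam mu nu : ℕ → ℕ)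
    (hlam : IsPartition n lam) (hmu : IsPartition n mu) (hnu : IsPartition n nu) :
    Set.ncard {T : ℕ → ℕ → Finset ℕ |
        IsSSVT n (ShapeBox mu) T ∧
        LamDominant n lam (rowWordRect n (mu 1) T) ∧
        ∀ i, 1 ≤ i → i ≤ n → lam i + wtT n (mu 1) T i = nu i} =
    Set.ncard {S : ℕ → ℕ → Finset ℕ |
        IsSVCT n lam S ∧
        LamDominant n mu (contraRowWord n (lam 1) S) ∧
        ∀ i, 1 ≤ i → i ≤ n → mu i + wtT n (lam 1) S i = nu i} := by
  have hA : Set.BijOn (fun p : (ℕ → ℕ → ℤ) × (ℕ → ℕ → ℤ) => tab n p.1 p.2)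
      {p | PatA n lam mu nu p.1 p.2}
      {T | IsSSVT n (ShapeBox mu) T ∧ LamDominant n lam (rowWordRect n (mu 1) T) ∧
        ∀ i, 1 ≤ i → i ≤ n → lam i + wtT n (mu 1) T i = nu i} :=
    bijOn_sep (bijOn_tab hmu) fun p hp => (dominant_tab_iff hlam hmu hp).symm
  have hB : Set.BijOn (fun p : (ℕ → ℕ → ℤ) × (ℕ → ℕ → ℤ) => rot n (lam 1) (tab n p.1 p.2))
      {p | PatB n lam mu nu p.1 p.2}
      {S | IsSVCT n lam S ∧ LamDominant n mu (contraRowWord n (lam 1) S) ∧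
        ∀ i, 1 ≤ i → i ≤ n → mu i + wtT n (lam 1) S i = nu i} :=
    bijOn_sep ((bijOn_rot hlam).comp (bijOn_tab hlam)) fun p hp =>
      (dominant_rot_tab_iff hlam hmu hp).symm
  exact hA.ncard_eq.symm.trans ((ncard_PatA_eq_ncard_PatB hlam hmu hnu).trans hB.ncard_eq)
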